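/- arXiv:2304.08845 — 5 statements merged into one kernel-verified Lean document; each statement's English description precedes it below -/
import Mathlib

section
/- Suppose the action space 𝒰 is finite and nonempty. Then for every state x ∈ 𝒳, the optimal constraint decay function satisfies F*(x) = 0 if and only if x belongs to the maximum feasible region X*; that is, the zero-level set of F* equals X*. -/
/-!
The easy direction holds because `F^π ≥ 0`, with value `0` for a policy feasible at `x`.

For the converse, if `F*(x) = 0` then for each `n` some policy has `F^π(x) < γ ^ n`, so it keeps the
constraint for all times `t ≤ n`. A single policy that works for all times comes from compactness:
with `U` discrete and finite, the product space `X → U` of policies is compact (Tychonoff). The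
state at time `t` depends on finitely many values of the policy only, so it is a locally constant
function of the policy, and the policies that are safe up to time `n` form a closed set. These sets
are nonempty and decreasing in `n`; by Cantor's intersection theorem they have a common element.
-/

open scoped Classical

variable {X U : Type*}

/-- Trajectory from `x` under policy `π`: `x₀ = x`, `x_{t+1} = f xₜ (π xₜ)`. -/
def traj (f : X → U → X) (π : X → U) (x : X) : ℕ → X
  | 0 => x
  | t + 1 => f (traj f π x t) (π (traj f π x t))

/-- Constraint indicator: `c(x) = 1` if `h x > 0`, else `0`. -/
noncomputable def cInd (h : X → ℝ) (x : X) : ℝ := if h x > 0 then 1 else 0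

/-- Constraint decay function `F^π(x) = γ ^ (N^π x)` with `γ ^ ∞ := 0`,
where `N^π x` is the least `t` with `h (xₜ) > 0` along the trajectory. -/
noncomputable def Fcdf (f : X → U → X) (h : X → ℝ) (γ : ℝ) (π : X → U) (x : X) : ℝ :=
  if hx : ∃ t, h (traj f π x t) > 0 then γ ^ Nat.find hx else 0

/-- Feasible region of a policy `π`. -/
def Xfeas (f : X → U → X) (h : X → ℝ) (π : X → U) : Set X :=
  {x | ∀ t, h (traj f π x t) ≤ 0}

/-- Maximum feasible region. -/
def Xstar (f : X → U → X) (h : X → ℝ) : Set X :=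
  {x | ∃ π : X → U, x ∈ Xfeas f h π}

/-- Optimal constraint decay function: infimum of `F^π` over all policies. -/
noncomputable def Fstar (f : X → U → X) (h : X → ℝ) (γ : ℝ) (x : X) : ℝ :=
  ⨅ π : X → U, Fcdf f h γ π x

/-- State-value function of a policy. -/
noncomputable def Vval (f : X → U → X) (r : X → U → ℝ) (γ : ℝ) (π : X → U) (x : X) : ℝ :=
  ∑' t : ℕ, γ ^ t * r (traj f π x t) (π (traj f π x t))

/-- Optimal state-value function: max of `V^π` over policies whose feasible
region equals the maximum feasible region. -/
noncomputable def Vstar (f : X → U → X) (h : X → ℝ) (r : X → U → ℝ) (γ : ℝ) (x : X) : ℝ :=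
  ⨆ π : {π : X → U // Xfeas f h π = Xstar f h}, Vval f r γ π.1 x

theorem Fcdf_nonneg (f : X → U → X) (h : X → ℝ) {γ : ℝ} (hγ0 : 0 < γ) (π : X → U) (x : X) :
    0 ≤ Fcdf f h γ π x := by
  unfold Fcdf
  split_ifs
  · positivity
  · exact le_rfl

theorem safe_of_Fcdf_lt (f : X → U → X) (h : X → ℝ) {γ : ℝ} (hγ0 : 0 < γ) (hγ1 : γ < 1)
    (π : X → U) (x : X) {n : ℕ} (hlt : Fcdf f h γ π x < γ ^ n) :
    ∀ t ≤ n, h (traj f π x t) ≤ 0 := by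
  intro t ht
  by_contra! hpos
  have hx : ∃ t, h (traj f π x t) > 0 := ⟨t, hpos⟩
  rw [Fcdf, dif_pos hx] at hlt
  have hN : Nat.find hx ≤ n := (Nat.find_min' hx hpos).trans ht
  exact absurd (pow_le_pow_of_le_one hγ0.le hγ1.le hN) (not_le.mpr hlt)

/-- Near `π` in the product topology, policies agree with `π` at the finitely many states visited
before time `t`, hence reach the same state at time `t`. -/
theorem isLocallyConstant_traj [TopologicalSpace U] [DiscreteTopology U]
    (f : X → U → X) (x : X) (t : ℕ) :
    IsLocallyConstant fun π : X → U => traj f π x t := by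
  induction t with
  | zero => exact IsLocallyConstant.const x
  | succ t ih =>
    rw [IsLocallyConstant.iff_eventually_eq] at ih ⊢
    intro π
    have hcoord : ∀ᶠ π' in nhds π, π' (traj f π x t) = π (traj f π x t) :=
      (continuous_apply (traj f π x t)).continuousAt.eventually
        ((isOpen_discrete {π (traj f π x t)}).mem_nhds rfl)
    filter_upwards [ih π, hcoord] with π' h1 h2
    simp only [traj, h1, h2]

/-- If for every horizon some policy is safe from `x`, then one policy is safe from `x` forever. -/
theorem mem_Xstar_of_forall_horizon [Finite U] (f : X → U → X) (h : X → ℝ) (x : X)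
    (hsafe : ∀ n, ∃ π : X → U, ∀ t ≤ n, h (traj f π x t) ≤ 0) : x ∈ Xstar f h := by
  let _ : TopologicalSpace U := ⊥
  have _ : DiscreteTopology U := ⟨rfl⟩
  have hclosed : ∀ n, IsClosed {π : X → U | ∀ t ≤ n, h (traj f π x t) ≤ 0} := by
    intro n
    simp only [Set.ofPred_forall]
    exact isClosed_iInter fun t => isClosed_iInter fun _ =>
      ⟨(isLocallyConstant_traj f x t) {y | h y ≤ 0}ᶜ⟩
  obtain ⟨π, hπ⟩ := IsCompact.nonempty_iInter_of_sequence_nonempty_isCompact_isClosed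
    (fun n => {π : X → U | ∀ t ≤ n, h (traj f π x t) ≤ 0})
    (fun n π hπ t ht => hπ t (ht.trans n.le_succ)) hsafe (hclosed 0).isCompact hclosed
  exact ⟨π, fun t => Set.mem_iInter.mp hπ t t le_rfl⟩

/-- with a finite nonempty action space, the zero-level set of the
optimal CDF is the maximum feasible region. -/
theorem optimal_cdf_zero_iff_max_feasible [Finite U] [Nonempty U]
    (f : X → U → X) (h : X → ℝ) (γ : ℝ) (hγ0 : 0 < γ) (hγ1 : γ < 1) :
    ∀ x : X, Fstar f h γ x = 0 ↔ x ∈ Xstar f h := by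
  intro x
  constructor
  · intro h0
    refine mem_Xstar_of_forall_horizon f h x fun n => ?_
    have hlt : ⨅ π : X → U, Fcdf f h γ π x < γ ^ n :=
      lt_of_eq_of_lt h0 (pow_pos hγ0 n)
    obtain ⟨π, hπ⟩ := exists_lt_of_ciInf_lt hlt
    exact ⟨π, safe_of_Fcdf_lt f h hγ0 hγ1 π x hπ⟩
  · rintro ⟨π, hπ⟩
    have hzero : Fcdf f h γ π x = 0 :=
      dif_neg fun ⟨t, ht⟩ => absurd (hπ t) (not_le.mpr ht)
    have hnonneg := fun π' : X → U => Fcdf_nonneg f h hγ0 π' x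
    refine le_antisymm ?_ (le_ciInf hnonneg)
    exact (ciInf_le ⟨0, Set.forall_mem_range.mpr hnonneg⟩ π).trans_eq hzero
end

section
/- For every policy π and every state x ∈ 𝒳, the constraint decay function satisfies the self-consistency condition F^π(x) = c(x) + (1 − c(x))·γ·F^π(f(x, π(x))). -/
/-! The trajectory from `x` shifted by one step is the trajectory from `f x (π x)`. Hence, if `x`
violates the constraint, then `N^π x = 0` and both sides equal `1`; otherwise
`N^π x = N^π (f x (π x)) + 1`, with both sides `0` when the violation time is infinite. -/

open scoped Classical

variable {X U : Type*}

/-- The trajectory is defined by appending a last step; this peels off the first one. -/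
lemma traj_succ_eq_traj_step (f : X → U → X) (π : X → U) (x : X) (t : ℕ) :
    traj f π x (t + 1) = traj f π (f x (π x)) t := by
  induction t with
  | zero => rfl
  | succ t ih => rw [traj, ih, traj]

/-- self-consistency condition of the CDF. -/
theorem cdf_self_consistency (f : X → U → X) (h : X → ℝ) (γ : ℝ)
    (hγ0 : 0 < γ) (hγ1 : γ < 1) (π : X → U) (x : X) :
    Fcdf f h γ π x = cInd h x + (1 - cInd h x) * γ * Fcdf f h γ π (f x (π x)) := by
  by_cases h0 : h x > 0
  · -- Both sides are `1`: the first violation is at time `0`.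
    have hx : ∃ t, h (traj f π x t) > 0 := ⟨0, h0⟩
    have hz : Nat.find hx = 0 := (Nat.find_eq_zero hx).2 h0
    simp only [Fcdf, cInd, dif_pos hx, hz, if_pos h0]
    ring
  · by_cases hy : ∃ t, h (traj f π (f x (π x)) t) > 0
    · have hx : ∃ t, h (traj f π x t) > 0 := by
        obtain ⟨t, ht⟩ := hy
        exact ⟨t + 1, by rwa [traj_succ_eq_traj_step]⟩
      -- No violation at time `0`, so the violation time drops by exactly one after a step.
      have hs : Nat.find hx = Nat.find hy + 1 := by
        rw [Nat.find_eq_iff]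
        refine ⟨by rw [traj_succ_eq_traj_step]; exact Nat.find_spec hy, ?_⟩
        rintro (_ | n) hn
        · exact h0
        · rw [traj_succ_eq_traj_step]
          exact Nat.find_min hy (by omega)
      simp only [Fcdf, cInd, dif_pos hx, dif_pos hy, hs, if_neg h0]
      ring
    · have hx : ¬ ∃ t, h (traj f π x t) > 0 := by
        rintro ⟨_ | t, ht⟩
        · exact h0 ht
        · exact hy ⟨t, by rwa [← traj_succ_eq_traj_step]⟩
      simp only [Fcdf, cInd, dif_neg hx, dif_neg hy, if_neg h0]
      ring
end

section
/- (Monotonic expansion) Let π and π′ be policies such that (i) for every x ∈ X^π, F^π(f(x, π′(x))) = 0, and (ii) for every x ∉ X^π and every u ∈ 𝒰, F^π(f(x, π′(x))) ≤ F^π(f(x, u)). Then the feasible region of π′ contains that of π: X^π ⊆ X^{π′}. -/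
/-!
A state has constraint decay value `0` only if the trajectory from it never violates the constraint,
because `γ ^ n > 0` for every finite `n` (`mem_Xfeas_of_Fcdf_eq_zero`). Hence the condition on `π'`
over `Xfeas f h π` says that this set is forward invariant under `π'`. By induction on time every
trajectory of `π'` started in it stays in it, and each of its states satisfies `h ≤ 0`.
-/

open scoped Classical

variable {X U : Type*}

theorem mem_Xfeas_of_Fcdf_eq_zero (f : X → U → X) (h : X → ℝ) {γ : ℝ} (hγ0 : 0 < γ)
    (π : X → U) {x : X} (hF : Fcdf f h γ π x = 0) : x ∈ Xfeas f h π := by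
  intro t
  by_contra! ht
  have hx : ∃ t, h (traj f π x t) > 0 := ⟨t, ht⟩
  rw [Fcdf, dif_pos hx] at hF
  exact (pow_pos hγ0 _).ne' hF

/-- Monotonic expansion: the feasible region of `π'` contains
that of `π`. -/
theorem monotonic_expansion (f : X → U → X) (h : X → ℝ) (γ : ℝ)
    (hγ0 : 0 < γ) (hγ1 : γ < 1) (π π' : X → U)
    (h1 : ∀ x ∈ Xfeas f h π, Fcdf f h γ π (f x (π' x)) = 0)
    (h2 : ∀ x ∉ Xfeas f h π, ∀ u : U,
      Fcdf f h γ π (f x (π' x)) ≤ Fcdf f h γ π (f x u)) :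
    Xfeas f h π ⊆ Xfeas f h π' := by
  intro x hx
  have inv : ∀ t, traj f π' x t ∈ Xfeas f h π := by
    intro t
    induction t with
    | zero => exact hx
    | succ t ih => exact mem_Xfeas_of_Fcdf_eq_zero f h hγ0 π (h1 _ ih)
  exact fun t => inv t 0
end

section
/- The risky Bellman operator D*, defined on functions F : 𝒳 → [0,1] by (D* F)(x) = c(x) + (1 − c(x))·γ·inf_{u∈𝒰} F(f(x, u)), satisfies d_∞(D* F_1, D* F_2) ≤ γ·d_∞(F_1, F_2) for all F_1, F_2 : 𝒳 → [0,1]; in particular D* has at most one fixed point among functions 𝒳 → [0,1]. -/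
/-!
Taking an infimum over actions is nonexpansive for the sup metric: if `|F₁ - F₂| ≤ M` everywhere,
then `F₁ (f x u) ≤ F₂ (f x u) + M` for each `u`, and this passes to the infima
(`abs_iInf_sub_iInf_le`). The operator `D*` multiplies the difference of the infima by
`(1 - c x) * γ`, which lies in `[0, γ]`, so `D*` is a `γ`-contraction
(`abs_Dstar_sub_Dstar_le`). For two fixed points the distance `d` satisfies
`d ≤ γ * d` with `γ < 1`, which forces `d = 0`. Since the functions take values in `[0, 1]`, all
the suprema and infima involved are those of bounded sets.
-/

open scoped Classical

variable {X U : Type*}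

/-- The risky Bellman operator `D*`. -/
noncomputable def Dstar (f : X → U → X) (h : X → ℝ) (γ : ℝ)
    (F : X → ℝ) (x : X) : ℝ :=
  cInd h x + (1 - cInd h x) * γ * ⨅ u : U, F (f x u)

theorem abs_iInf_sub_iInf_le {ι : Type*} [Nonempty ι] {a b : ι → ℝ} {M : ℝ}
    (ha : BddBelow (Set.range a)) (hb : BddBelow (Set.range b))
    (hab : ∀ i, |a i - b i| ≤ M) : |(⨅ i, a i) - ⨅ i, b i| ≤ M := by
  rw [abs_sub_le_iff]
  constructor
  · have : (⨅ i, a i) - M ≤ ⨅ i, b i := le_ciInf fun i => by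
      have h1 := ciInf_le ha i
      have h2 := (abs_sub_le_iff.1 (hab i)).1
      linarith
    linarith
  · have : (⨅ i, b i) - M ≤ ⨅ i, a i := le_ciInf fun i => by
      have h1 := ciInf_le hb i
      have h2 := (abs_sub_le_iff.1 (hab i)).2
      linarith
    linarith

theorem bddAbove_range_abs_sub {F₁ F₂ : X → ℝ} (h₁ : ∀ x, F₁ x ∈ Set.Icc (0:ℝ) 1)
    (h₂ : ∀ x, F₂ x ∈ Set.Icc (0:ℝ) 1) :
    BddAbove (Set.range fun x => |F₁ x - F₂ x|) := by
  refine ⟨1, ?_⟩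
  rintro _ ⟨x, rfl⟩
  have := h₁ x
  have := h₂ x
  simp only [Set.mem_Icc] at *
  rw [abs_sub_le_iff]
  constructor <;> linarith

/-- Pointwise form of the contraction property. -/
theorem abs_Dstar_sub_Dstar_le [Nonempty U] (f : X → U → X) (h : X → ℝ) {γ : ℝ} (hγ : 0 ≤ γ)
    {F₁ F₂ : X → ℝ} (h₁ : ∀ x, F₁ x ∈ Set.Icc (0:ℝ) 1) (h₂ : ∀ x, F₂ x ∈ Set.Icc (0:ℝ) 1)
    (x : X) :
    |Dstar f h γ F₁ x - Dstar f h γ F₂ x| ≤ γ * ⨆ y : X, |F₁ y - F₂ y| := by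
  have hinf : |(⨅ u, F₁ (f x u)) - ⨅ u, F₂ (f x u)| ≤ ⨆ y : X, |F₁ y - F₂ y| := by
    refine abs_iInf_sub_iInf_le ⟨0, ?_⟩ ⟨0, ?_⟩
      fun u => le_ciSup (bddAbove_range_abs_sub h₁ h₂) (f x u)
    · rintro _ ⟨u, rfl⟩
      exact (h₁ _).1
    · rintro _ ⟨u, rfl⟩
      exact (h₂ _).1
  by_cases hx : h x > 0
  · have : 0 ≤ ⨆ y : X, |F₁ y - F₂ y| := Real.iSup_nonneg fun _ => abs_nonneg _
    simpa [Dstar, cInd, hx] using mul_nonneg hγ this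
  · simp only [Dstar, cInd, hx, if_false, zero_add, sub_zero, one_mul]
    rw [← mul_sub, abs_mul, abs_of_nonneg hγ]
    exact mul_le_mul_of_nonneg_left hinf hγ

/-- `D*` is a `γ`-contraction in the sup metric on functions
`X → [0,1]`; in particular it has at most one fixed point among them. -/
theorem risky_bellman_operator_contraction [Nonempty U] (f : X → U → X)
    (h : X → ℝ) (γ : ℝ) (hγ0 : 0 < γ) (hγ1 : γ < 1) :
    (∀ F₁ F₂ : X → ℝ, (∀ x, F₁ x ∈ Set.Icc (0:ℝ) 1) → (∀ x, F₂ x ∈ Set.Icc (0:ℝ) 1) →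
      (⨆ x : X, |Dstar f h γ F₁ x - Dstar f h γ F₂ x|) ≤
        γ * ⨆ x : X, |F₁ x - F₂ x|) ∧
    (∀ F₁ F₂ : X → ℝ, (∀ x, F₁ x ∈ Set.Icc (0:ℝ) 1) → (∀ x, F₂ x ∈ Set.Icc (0:ℝ) 1) →
      Dstar f h γ F₁ = F₁ → Dstar f h γ F₂ = F₂ → F₁ = F₂) := by
  refine ⟨fun F₁ F₂ h₁ h₂ => ?_, fun F₁ F₂ h₁ h₂ e₁ e₂ => ?_⟩
  -- `Real.iSup_le` also covers empty `X`, where both suprema are `0` by convention.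
  · exact Real.iSup_le (abs_Dstar_sub_Dstar_le f h hγ0.le h₁ h₂)
      (mul_nonneg hγ0.le (Real.iSup_nonneg fun _ => abs_nonneg _))
  · have hnn : 0 ≤ ⨆ y : X, |F₁ y - F₂ y| := Real.iSup_nonneg fun _ => abs_nonneg _
    have hle : (⨆ y : X, |F₁ y - F₂ y|) ≤ γ * ⨆ y : X, |F₁ y - F₂ y| := by
      refine Real.iSup_le (fun x => ?_) (mul_nonneg hγ0.le hnn)
      have := abs_Dstar_sub_Dstar_le f h hγ0.le h₁ h₂ x
      rwa [e₁, e₂] at this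
    have hzero : (⨆ y : X, |F₁ y - F₂ y|) ≤ 0 := by nlinarith
    funext x
    have hx := (le_ciSup (bddAbove_range_abs_sub h₁ h₂) x).trans hzero
    exact sub_eq_zero.1 (abs_nonpos_iff.1 hx)
end

section
/- For every policy π and every state x ∈ 𝒳, the constraint decay function admits the series representation F^π(x) = Σ_{t=0}^∞ γ^t · (∏_{s=0}^{t−1} (1 − c(x_s))) · c(x_t), where (x_t) is the trajectory from x under π and the empty product is 1. -/
/-!
The series has at most one nonzero term. Before the first violation time `N` the factor `c(xₜ)`
vanishes; after it the product contains the factor `1 - c(x_N) = 0`; at `t = N` the term is `γ ^ N`.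
If the constraint is never violated, every term is zero. Convergence is therefore not an issue.
-/

open scoped Classical

variable {X U : Type*}

/-- series representation of the CDF. -/
theorem cdf_series_representation (f : X → U → X) (h : X → ℝ) (γ : ℝ)
    (hγ0 : 0 < γ) (hγ1 : γ < 1) (π : X → U) (x : X) :
    Fcdf f h γ π x = ∑' t : ℕ,
      γ ^ t * (∏ s ∈ Finset.range t, (1 - cInd h (traj f π x s))) *
        cInd h (traj f π x t) := by
  unfold Fcdf
  split_ifs with hx
  · have hfirst : ∀ s < Nat.find hx, cInd h (traj f π x s) = 0 := fun s hs =>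
      if_neg (Nat.find_min hx hs)
    have hhit : cInd h (traj f π x (Nat.find hx)) = 1 := if_pos (Nat.find_spec hx)
    -- Only the term at the first violation time survives.
    rw [tsum_eq_single (Nat.find hx)]
    · rw [Finset.prod_eq_one fun s hs => by simp [hfirst s (Finset.mem_range.mp hs)], hhit]
      ring
    · intro t ht
      rcases lt_or_gt_of_ne ht with hlt | hgt
      · simp [hfirst t hlt]
      · -- After that time the product contains the factor `1 - 1`.
        rw [Finset.prod_eq_zero (Finset.mem_range.mpr hgt) (by rw [hhit, sub_self])]
        ring
  · have hzero : ∀ t, cInd h (traj f π x t) = 0 := fun t => if_neg fun ht => hx ⟨t, ht⟩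
    simp [hzero]
end
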